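/- arXiv:1507.03069 — 2 statements merged into one kernel-verified Lean document; each statement's English description precedes it below -/
import Mathlib

section
/- Let E be a real quadratic field of discriminant D > 12, assumed prime and ≡ 1 mod 4, with ring of integers ℴ. Let g = (a b; c d) ∈ SL₂(ℴ) be an elliptic element (trace t = a + d ∈ {0, ±1}) and let 𝔭 be a prime ideal of ℴ. Then it is impossible that c, a − d, and b all lie in 𝔭. -/
/-!
Write `g = !![a, b; c, d]`. If `b`, `c` and `a - d` lie in `𝔭`, then `g` is scalar modulo `𝔭`, and
`det g = 1` forces `g ≡ ±1`. Replacing `g` by `-g` if necessary, all entries of `g - 1` lie in `𝔭`,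
so `det (g - 1) = 2 - tr g` lies in `𝔭 ^ 2`. For `tr g ∈ {0, ±1}` both `2 - tr g` and `2 + tr g`
divide `6`, hence `6 ∈ 𝔭 ^ 2`. But `𝔭 ^ 2` contains a squarefree integer only if the rational prime
below `𝔭` divides that integer and ramifies, and no prime factor of `6` divides a prime
discriminant `D > 12`.
-/

section Matrix

open Matrix

variable {R : Type*} [CommRing R]

theorem det_mem_pow_card_of_mem_matrix {n : Type*} [Fintype n] [DecidableEq n] {I : Ideal R}
    {A : Matrix n n R} (hA : A ∈ I.matrix n) : A.det ∈ I ^ Fintype.card n := by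
  rw [det_apply']
  refine sum_mem fun σ _ ↦ Ideal.mul_mem_left _ _ ?_
  simpa using Ideal.prod_mem_prod (s := Finset.univ) (I := fun _ ↦ I) fun i _ ↦ hA (σ i) i

theorem det_sub_one_fin_two_of_det_eq_one {g : Matrix (Fin 2) (Fin 2) R} (hdet : g.det = 1) :
    (g - 1).det = 2 - g.trace := by
  rw [det_fin_two] at hdet
  simp only [det_fin_two, trace_fin_two, Matrix.sub_apply, one_apply_eq, ne_eq, zero_ne_one,
    one_ne_zero, not_false_eq_true, one_apply_ne, sub_zero]
  linear_combination hdet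

theorem two_sub_trace_mem_sq {I : Ideal R} {g : Matrix (Fin 2) (Fin 2) R} (hdet : g.det = 1)
    (hg : g - 1 ∈ I.matrix (Fin 2)) : 2 - g.trace ∈ I ^ 2 := by
  rw [← det_sub_one_fin_two_of_det_eq_one hdet]
  exact det_mem_pow_card_of_mem_matrix hg

theorem sub_one_mem_matrix_or_neg_sub_one_mem_matrix {P : Ideal R} [hP : P.IsPrime]
    {g : Matrix (Fin 2) (Fin 2) R} (hdet : g.det = 1) (hc : g 1 0 ∈ P)
    (had : g 0 0 - g 1 1 ∈ P) (hb : g 0 1 ∈ P) :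
    g - 1 ∈ P.matrix (Fin 2) ∨ -g - 1 ∈ P.matrix (Fin 2) := by
  have hmul : (g 0 0 - 1) * (-g 0 0 - 1) ∈ P := by
    have heq : (g 0 0 - 1) * (-g 0 0 - 1) = -(g 0 0 * (g 0 0 - g 1 1)) - g 0 1 * g 1 0 := by
      rw [det_fin_two] at hdet
      linear_combination -hdet
    rw [heq]
    exact sub_mem (neg_mem (P.mul_mem_left _ had)) (P.mul_mem_left _ hc)
  refine (hP.mem_or_mem hmul).imp (fun ha ↦ ?_) (fun ha ↦ ?_)
  · have hd : g 1 1 - 1 ∈ P := by simpa using sub_mem ha had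
    simp [Fin.forall_fin_two, ha, hb, hc, hd]
  · have hd : -g 1 1 - 1 ∈ P := by
      have heq : -g 1 1 - 1 = (-g 0 0 - 1) + (g 0 0 - g 1 1) := by ring
      exact heq ▸ add_mem ha had
    simp [Fin.forall_fin_two, ha, hb, hc, hd]

theorem two_sub_trace_mem_sq_or_two_add_trace_mem_sq {P : Ideal R} [P.IsPrime]
    {g : Matrix (Fin 2) (Fin 2) R} (hdet : g.det = 1) (hc : g 1 0 ∈ P)
    (had : g 0 0 - g 1 1 ∈ P) (hb : g 0 1 ∈ P) :
    2 - g.trace ∈ P ^ 2 ∨ 2 + g.trace ∈ P ^ 2 := by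
  refine (sub_one_mem_matrix_or_neg_sub_one_mem_matrix hdet hc had hb).imp
    (two_sub_trace_mem_sq hdet) fun hneg ↦ ?_
  have hdet_neg : (-g).det = 1 := by simp [det_neg, hdet]
  simpa using two_sub_trace_mem_sq hdet_neg hneg

end Matrix

section NumberField

open NumberField

variable {E : Type*} [Field E] [NumberField E]

theorem intCast_notMem_sq_of_not_dvd_discr {p : ℤ} (hp : Prime p) (hdvd : ¬ p ∣ discr E)
    (P : Ideal (𝓞 E)) [P.IsPrime] : (p : 𝓞 E) ∉ P ^ 2 := by
  intro hmem
  have hunram : Algebra.IsUnramifiedAt ℤ P :=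
    (not_dvd_discr_iff_forall_mem E (𝓞 E) hp).mp hdvd P ‹_› (Ideal.pow_le_self two_ne_zero hmem)
  have hbot : Ideal.span {p} ≠ ⊥ := Ideal.span_singleton_eq_bot.not.mpr hp.ne_zero
  have : (Ideal.span {p}).IsMaximal :=
    ((Ideal.span_singleton_prime hp.ne_zero).mpr hp).isMaximal hbot
  have hdiff : P ^ (2 - 1) ∣ differentIdeal ℤ (𝓞 E) := by
    refine pow_sub_one_dvd_differentIdeal ℤ P 2 hbot (Ideal.dvd_iff_le.mpr ?_)
    simpa [Ideal.map_span, Ideal.span_le] using hmem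
  exact not_dvd_differentIdeal_iff.mpr hunram (by simpa using hdiff)

theorem intCast_notMem_sq_of_squarefree_of_isCoprime_discr {n : ℤ} (hn : Squarefree n)
    (hcop : IsCoprime n (discr E)) (P : Ideal (𝓞 E)) [hP : P.IsPrime] : (n : 𝓞 E) ∉ P ^ 2 := by
  induction n using UniqueFactorizationMonoid.induction_on_prime with
  | h₁ => exact absurd hn not_squarefree_zero
  | h₂ u hu =>
    exact fun hmem ↦ hP.ne_top <|
      P.eq_top_of_isUnit_mem (Ideal.pow_le_self two_ne_zero hmem) (hu.map (Int.castRingHom (𝓞 E)))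
  | h₃ m p _ hp ih =>
    intro hmem
    obtain ⟨hrel, -, hm⟩ := squarefree_mul_iff.mp hn
    have hm_sq : (m : 𝓞 E) ∉ P ^ 2 := ih hm hcop.of_mul_left_right
    have hp_sq : (p : 𝓞 E) ∉ P ^ 2 :=
      intCast_notMem_sq_of_not_dvd_discr hp (hp.coprime_iff_not_dvd.mp hcop.of_mul_left_left) P
    rw [Int.cast_mul] at hmem
    have hpP : (p : 𝓞 E) ∈ P := (Ideal.IsPrime.mul_mem_pow P hmem).resolve_right hm_sq
    have hmP : (m : 𝓞 E) ∈ P :=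
      (Ideal.IsPrime.mul_mem_pow P (mul_comm (p : 𝓞 E) m ▸ hmem)).resolve_right hp_sq
    obtain ⟨u, v, huv⟩ := hrel.isCoprime
    have hone : (u * p + v * m : 𝓞 E) = 1 := mod_cast huv
    exact hP.one_notMem (hone ▸ add_mem (P.mul_mem_left _ hpP) (P.mul_mem_left _ hmP))

theorem elliptic_element_entries_not_all_in_prime_general {n : ℤ} (hn : Squarefree n)
    (hcop : IsCoprime n (discr E)) (g : Matrix (Fin 2) (Fin 2) (𝓞 E)) (hdet : g.det = 1)
    (hsub : 2 - g.trace ∣ (n : 𝓞 E)) (hadd : 2 + g.trace ∣ (n : 𝓞 E))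
    (P : Ideal (𝓞 E)) [P.IsPrime] :
    ¬ (g 1 0 ∈ P ∧ g 0 0 - g 1 1 ∈ P ∧ g 0 1 ∈ P) := by
  rintro ⟨hc, had, hb⟩
  refine intCast_notMem_sq_of_squarefree_of_isCoprime_discr hn hcop P ?_
  exact (two_sub_trace_mem_sq_or_two_add_trace_mem_sq hdet hc had hb).elim
    (Ideal.mem_of_dvd _ hsub) (Ideal.mem_of_dvd _ hadd)

end NumberField

theorem two_sub_dvd_six_and_two_add_dvd_six {R : Type*} [CommRing R] {t : R}
    (ht : t = 0 ∨ t = 1 ∨ t = -1) : 2 - t ∣ 6 ∧ 2 + t ∣ 6 := by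
  -- The two cofactors come from `t ^ 3 - t ± 6 = (t ± 2) * (t ^ 2 ∓ 2 * t + 3)`.
  have hcube : t ^ 3 = t := by rcases ht with rfl | rfl | rfl <;> ring
  exact ⟨⟨t ^ 2 + 2 * t + 3, by linear_combination hcube⟩,
    ⟨t ^ 2 - 2 * t + 3, by linear_combination -hcube⟩⟩

theorem squarefree_six : Squarefree (6 : ℤ) := by
  rw [show (6 : ℤ) = 2 * 3 by norm_num, squarefree_mul_iff]
  exact ⟨IsCoprime.isRelPrime (by norm_num), Int.prime_two.squarefree, Int.prime_three.squarefree⟩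

theorem isCoprime_of_pos_of_lt_prime {n p : ℤ} (hp : Prime p) (hn : 0 < n) (hlt : n < p) :
    IsCoprime n p :=
  (hp.coprime_iff_not_dvd.mpr fun hdvd ↦ hlt.not_ge (Int.le_of_dvd hn hdvd)).symm

theorem elliptic_element_entries_not_all_in_prime
    (E : Type*) [Field E] [NumberField E]
    (hdeg : Module.finrank ℚ E = 2)
    (D : ℤ) (hD : Prime D) (hD4 : D % 4 = 1) (hD12 : 12 < D)
    (hdisc : NumberField.discr E = D)
    (g : Matrix (Fin 2) (Fin 2) (NumberField.RingOfIntegers E))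
    (hdet : g.det = 1)
    (htr : g.trace = 0 ∨ g.trace = 1 ∨ g.trace = -1)
    (𝔭 : Ideal (NumberField.RingOfIntegers E)) [𝔭.IsPrime] :
    ¬ (g 1 0 ∈ 𝔭 ∧ g 0 0 - g 1 1 ∈ 𝔭 ∧ g 0 1 ∈ 𝔭) := by
  have hcop : IsCoprime 6 (NumberField.discr E) :=
    hdisc ▸ isCoprime_of_pos_of_lt_prime hD (by norm_num) (by lia)
  obtain ⟨hsub, hadd⟩ := two_sub_dvd_six_and_two_add_dvd_six htr
  exact elliptic_element_entries_not_all_in_prime_general squarefree_six hcop g hdet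
    (mod_cast hsub) (mod_cast hadd) 𝔭
end

section
/- Let D > 0 be a fundamental discriminant with D > 500. Then the quantity c = (1/2) · Σ_{x² < D, x² ≡ D mod 4} Σ_{a > 0, a | (D−x²)/4} 1 satisfies c ≤ (1/2)·D^{1/2}·((3/(2π²))·log² D + 1.05·log D). -/
/- STATEMENT 13: For a fundamental discriminant `D > 500`,
`c = (1/2) Σ_{x² < D, x² ≡ D (4)} Σ_{a>0, a | (D−x²)/4} 1`
satisfies `c ≤ (1/2)·√D·((3/(2π²))·log²D + 1.05·log D)`. -/

/-- `d` is a fundamental discriminant: either `d ≡ 1 (mod 4)` and `d` is squarefree, or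
`d = 4m` with `m` squarefree and `m ≡ 2, 3 (mod 4)`. -/
def IsFundamentalDiscriminant (d : ℤ) : Prop :=
  (d % 4 = 1 ∧ Squarefree d) ∨
    (d % 4 = 0 ∧ Squarefree (d / 4) ∧ (d / 4 % 4 = 2 ∨ d / 4 % 4 = 3))

/-!
In each pair of complementary divisors of `(D - x²) / 4` the smaller one, `a`, satisfies
`4a² ≤ D - x²`, so the divisor sum is at most twice the number of pairs `(x, a)` with `4a ∣ D - x²`
and `4a² ≤ D - x²`. For fixed `a` the square roots of `D` modulo `4a` form at most `2 ^ ω(a)`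
classes modulo `2a`: as `D` is fundamental, a prime whose square divides `a` does not divide `x`,
and the roots are told apart prime by prime. Writing `2 ^ ω(a)` as the number of squarefree
divisors `m` of `a` turns the count into a sum over squarefree `m ≤ √D / 2` of a lattice-point
count `f (D / m²)` that no longer involves `D` arithmetically.

The hyperbola method gives `f x ≤ √x (log x / 2 - 0.08) + 1`, and partial summation against
`∑ 1 / m ≤ (6 / π²) log N + O(1)`, a consequence of the Möbius count of squarefree integers,
produces the leading constant. The margins are thin for small arguments, where both estimates are
decided by integer computation.
-/

/-! ### Square roots of a fundamental discriminant modulo `4a` -/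

lemma IsFundamentalDiscriminant.isUnit_of_eq_sq_mul {D f e : ℤ} (hD : IsFundamentalDiscriminant D)
    (h : D = f ^ 2 * e) (he : e % 4 = 0 ∨ e % 4 = 1) : IsUnit f := by
  rcases hD with ⟨-, hsq⟩ | ⟨h0, hsq, hres⟩
  · exact hsq f ⟨e, by rw [h]; ring⟩
  · obtain ⟨m, rfl⟩ : ∃ m, D = 4 * m := ⟨D / 4, by omega⟩
    rw [Int.mul_ediv_cancel_left _ (by norm_num)] at hsq hres
    rcases Int.even_or_odd' f with ⟨g, rfl | rfl⟩
    · have hm : m = g ^ 2 * e := by linarith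
      have hg : g ^ 2 % 4 = 0 ∨ g ^ 2 % 4 = 1 := by
        rcases Int.even_or_odd' g with ⟨k, rfl | rfl⟩
        · left; ring_nf; omega
        · right; ring_nf; omega
      rw [hm, Int.mul_emod] at hres
      rcases hg with hg | hg <;> rcases he with he | he <;> simp [hg, he] at hres
    · obtain ⟨e', rfl⟩ : ∃ e', e = 4 * e' := by
        refine ⟨e / 4, ?_⟩
        have : e + 4 * (g ^ 2 * e + g * e - m) = 0 := by linear_combination -h
        omega
      exact hsq _ ⟨e', by linarith⟩

section Roots

variable {D x₀ x y s : ℤ} {a p j : ℕ}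

lemma IsFundamentalDiscriminant.not_dvd_of_sq_dvd (hD : IsFundamentalDiscriminant D)
    (hp : p.Prime) (hx : (4 * a : ℤ) ∣ D - x ^ 2) (hpa : p ^ 2 ∣ a) : ¬ (p : ℤ) ∣ x := by
  rintro ⟨z, rfl⟩
  obtain ⟨c, hc⟩ := hx
  obtain ⟨b, rfl⟩ := hpa
  push_cast at hc
  have hz : (z ^ 2 + 4 * (b * c)) % 4 = 0 ∨ (z ^ 2 + 4 * (b * c)) % 4 = 1 := by
    rcases Int.even_or_odd' z with ⟨k, rfl | rfl⟩
    · left; ring_nf; omega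
    · right; ring_nf; omega
  exact (Nat.prime_iff_prime_int.mp hp).not_isUnit
    (hD.isUnit_of_eq_sq_mul (by linear_combination hc) hz)

lemma IsFundamentalDiscriminant.prime_pow_dvd_or (hD : IsFundamentalDiscriminant D)
    (hp : p.Prime) (hx : (4 * a : ℤ) ∣ D - x ^ 2) (hpa : p ^ j ∣ a)
    (hs : (p : ℤ) ^ j ∣ s * (s + x)) : (p : ℤ) ^ j ∣ s ∨ (p : ℤ) ^ j ∣ s + x := by
  have hp' : Prime (p : ℤ) := Nat.prime_iff_prime_int.mp hp
  by_cases h1 : (p : ℤ) ∣ s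
  · by_cases h2 : (p : ℤ) ∣ s + x
    · have hj : j < 2 := by
        by_contra! hj
        exact hD.not_dvd_of_sq_dvd hp hx ((pow_dvd_pow p hj).trans hpa)
          ((dvd_add_right h1).mp h2)
      interval_cases j
      · simp
      · left; simpa using h1
    · left
      exact (hp'.coprime_iff_not_dvd.mpr h2).pow_left.dvd_of_dvd_mul_right hs
  · right
    exact (hp'.coprime_iff_not_dvd.mpr h1).pow_left.dvd_of_dvd_mul_left hs

/-- For two square roots `x₀`, `x` of `D` modulo `4a` write `x = x₀ + 2s`. Each prime power `q`
exactly dividing `a` divides `s` or `s + x₀`; the pattern records the primes for which `q ∣ s`. -/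
def rootPattern (x₀ : ℤ) (a : ℕ) (x : ℤ) : Finset ℕ :=
  a.primeFactors.filter fun p => (p : ℤ) ^ a.factorization p ∣ (x - x₀) / 2

lemma exists_eq_add_two_mul_of_four_mul_dvd (h₀ : (4 * a : ℤ) ∣ D - x₀ ^ 2)
    (hx : (4 * a : ℤ) ∣ D - x ^ 2) : ∃ s, x = x₀ + 2 * s ∧ (a : ℤ) ∣ s * (s + x₀) := by
  have h4 : (4 * a : ℤ) ∣ x ^ 2 - x₀ ^ 2 := by simpa using dvd_sub h₀ hx
  have h2 : Even (x - x₀) := by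
    have : Even (x ^ 2 - x₀ ^ 2) :=
      even_iff_two_dvd.mpr ((Dvd.intro (2 * a : ℤ) (by ring)).trans h4)
    simpa [Int.even_sub, Int.even_pow] using this
  obtain ⟨s, hs⟩ := even_iff_two_dvd.mp h2
  obtain rfl : x = x₀ + 2 * s := by linarith
  refine ⟨s, rfl, (mul_dvd_mul_iff_left (by norm_num : (4 : ℤ) ≠ 0)).mp ?_⟩
  rwa [show (x₀ + 2 * s) ^ 2 - x₀ ^ 2 = 4 * (s * (s + x₀)) by ring] at h4

lemma modEq_of_rootPattern_eq (hD : IsFundamentalDiscriminant D) (ha : a ≠ 0)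
    (h₀ : (4 * a : ℤ) ∣ D - x₀ ^ 2) (hx : (4 * a : ℤ) ∣ D - x ^ 2)
    (hy : (4 * a : ℤ) ∣ D - y ^ 2) (h : rootPattern x₀ a x = rootPattern x₀ a y) :
    x ≡ y [ZMOD (2 * a : ℕ)] := by
  obtain ⟨s, rfl, hs⟩ := exists_eq_add_two_mul_of_four_mul_dvd h₀ hx
  obtain ⟨t, rfl, ht⟩ := exists_eq_add_two_mul_of_four_mul_dvd h₀ hy
  suffices hdvd : a ∣ (t - s).natAbs by
    rw [Int.modEq_iff_dvd]
    push_cast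
    rw [show x₀ + 2 * t - (x₀ + 2 * s) = 2 * (t - s) by ring]
    exact mul_dvd_mul_left 2 (Int.natCast_dvd.mpr hdvd)
  rw [Nat.dvd_iff_prime_pow_dvd_dvd]
  intro p k hp hk
  refine (pow_dvd_pow p ((hp.pow_dvd_iff_le_factorization ha).mp hk)).trans ?_
  set q : ℤ := (p : ℤ) ^ a.factorization p with hq
  have hqa : p ^ a.factorization p ∣ a := Nat.ordProj_dvd a p
  have hqa' : q ∣ a := by rw [hq]; exact_mod_cast hqa
  rw [← Int.natCast_dvd, Nat.cast_pow, ← hq]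
  by_cases hpa : p ∈ a.primeFactors
  · have hiff : q ∣ s ↔ q ∣ t := by
      simpa [rootPattern, -Nat.mem_primeFactors, hpa, hq] using Finset.ext_iff.mp h p
    by_cases hqs : q ∣ s
    · exact dvd_sub (hiff.mp hqs) hqs
    · have hs' := (hD.prime_pow_dvd_or hp h₀ hqa (hqa'.trans hs)).resolve_left hqs
      have ht' := (hD.prime_pow_dvd_or hp h₀ hqa (hqa'.trans ht)).resolve_left (hiff.not.mp hqs)
      simpa using dvd_sub ht' hs'
  · have : a.factorization p = 0 := by
      rwa [← Finsupp.notMem_support_iff, Nat.support_factorization]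
    simp [hq, this]

end Roots

lemma card_le_two_mul_div_add_one {X : Finset ℤ} {q R : ℕ} (hq : 0 < q)
    (hX : ∀ x ∈ X, |x| ≤ R) (hmod : ∀ x ∈ X, ∀ y ∈ X, x ≡ y [ZMOD q]) : X.card ≤ 2 * R / q + 1 := by
  have hcard : (2 * R / q + 1 : ℕ) = (Finset.Icc (0 : ℤ) (2 * R / q : ℕ)).card := by
    rw [Int.card_Icc, sub_zero, ← Nat.cast_succ, Int.toNat_natCast]
  rw [hcard]
  refine Finset.card_le_card_of_injOn (fun x => (x + R) / q) (fun x hx => ?_)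
    fun x hx y hy hxy => ?_
  · obtain ⟨hlo, hhi⟩ := abs_le.mp (hX x hx)
    rw [Finset.mem_coe, Finset.mem_Icc, Int.natCast_ediv]
    exact ⟨Int.ediv_nonneg (by omega) (by omega),
      Int.ediv_le_ediv (by exact_mod_cast hq) (by push_cast; omega)⟩
  · have hrem : (x + R) % q = (y + R) % q := (hmod x hx y hy).add_right R
    have := Int.mul_ediv_add_emod (x + R) q
    rw [show (x + R) / q = (y + R) / q from hxy, hrem, Int.mul_ediv_add_emod] at this
    omega

/-- The number of `k : ℕ` with `k ^ 2 + 4 ≤ x`. Evaluated at `D / a ^ 2` it bounds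
the number of `x` with `x ^ 2 ≤ D - 4 * a ^ 2` in one residue class modulo `2a`. -/
def levelCount (x : ℕ) : ℕ := if 4 ≤ x then Nat.sqrt (x - 4) + 1 else 0

lemma lt_levelCount_iff {k x : ℕ} : k < levelCount x ↔ k ^ 2 + 4 ≤ x := by
  unfold levelCount
  split_ifs with h
  · rw [Nat.lt_succ_iff, Nat.le_sqrt']
    omega
  · omega

lemma card_le_two_pow_mul_levelCount {D a : ℕ} (hD : IsFundamentalDiscriminant D) (ha : a ≠ 0)
    {X : Finset ℤ} (hX : ∀ x ∈ X, (4 * a : ℤ) ∣ D - x ^ 2 ∧ 4 * (a : ℤ) ^ 2 ≤ D - x ^ 2) :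
    X.card ≤ 2 ^ a.primeFactors.card * levelCount (D / a ^ 2) := by
  rcases X.eq_empty_or_nonempty with rfl | ⟨x₀, hx₀⟩
  · simp
  set R := Nat.sqrt (D - 4 * a ^ 2)
  have hXR : ∀ x ∈ X, x.natAbs ^ 2 + 4 * a ^ 2 ≤ D := by
    intro x hx
    zify
    rw [sq_abs]
    linarith [(hX x hx).2]
  have hlevel : 2 * R / (2 * a) < levelCount (D / a ^ 2) := by
    rw [Nat.mul_div_mul_left _ _ two_pos, lt_levelCount_iff, Nat.le_div_iff_mul_le (by positivity),
      add_mul, ← mul_pow]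
    have hsq : (R / a * a) ^ 2 ≤ D - 4 * a ^ 2 :=
      (Nat.pow_le_pow_left (Nat.div_mul_le_self R a) 2).trans (Nat.sqrt_le' _)
    have := hXR x₀ hx₀
    omega
  rw [mul_comm, ← Finset.card_powerset]
  refine Finset.card_le_mul_card_image_of_maps_to (f := rootPattern x₀ a)
    (fun x _ => Finset.mem_powerset.mpr (Finset.filter_subset _ _)) _ fun P _ => ?_
  refine (card_le_two_mul_div_add_one (by positivity) (fun x hx => ?_)
    fun x hx y hy => ?_).trans hlevel
  · have := hXR x (Finset.mem_filter.mp hx).1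
    rw [Int.abs_eq_natAbs]
    exact_mod_cast Nat.le_sqrt'.mpr (by omega)
  · obtain ⟨hx, hxP⟩ := Finset.mem_filter.mp hx
    obtain ⟨hy, hyP⟩ := Finset.mem_filter.mp hy
    exact modEq_of_rootPattern_eq hD ha (hX x₀ hx₀).1 (hX x hx).1 (hX y hy).1
      (hxP.trans hyP.symm)

lemma card_divisors_le_two_mul_card_filter (n : ℕ) :
    n.divisors.card ≤ 2 * (n.divisors.filter fun a => a ^ 2 ≤ n).card := by
  set S := n.divisors.filter fun a => a ^ 2 ≤ n with hS
  have hsub : n.divisors ⊆ S ∪ S.image fun a => n / a := by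
    intro a ha
    obtain ⟨⟨b, rfl⟩, hn⟩ := Nat.mem_divisors.mp ha
    have hb : b ≠ 0 := right_ne_zero_of_mul hn
    simp only [Finset.mem_union, Finset.mem_image, hS, Finset.mem_filter, ha, true_and]
    rcases le_total a b with h | h
    · left; nlinarith
    · refine .inr ⟨b, ⟨Nat.mem_divisors.mpr ⟨Dvd.intro_left a rfl, hn⟩, by nlinarith⟩, ?_⟩
      exact Nat.mul_div_cancel a (by omega)
  calc n.divisors.card ≤ S.card + (S.image fun a => n / a).card :=
        (Finset.card_le_card hsub).trans (Finset.card_union_le _ _)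
    _ ≤ S.card + S.card := Nat.add_le_add_left Finset.card_image_le _
    _ = 2 * S.card := (two_mul _).symm

lemma sum_card_divisors_le {D : ℕ} (hD : IsFundamentalDiscriminant D) :
    ∑ x ∈ (Finset.Ioo (-D : ℤ) D).filter (fun x : ℤ => x ^ 2 < D ∧ (D - x ^ 2) % 4 = 0),
        ((D - x ^ 2) / 4).toNat.divisors.card ≤
      2 * ∑ a ∈ Finset.Ioc 0 D, 2 ^ a.primeFactors.card * levelCount (D / a ^ 2) := by
  set I := (Finset.Ioo (-D : ℤ) D).filter fun x : ℤ => x ^ 2 < D ∧ (D - x ^ 2) % 4 = 0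
  let r : ℤ → ℕ → Prop := fun x a => (4 * a : ℤ) ∣ D - x ^ 2 ∧ 4 * (a : ℤ) ^ 2 ≤ D - x ^ 2
  have hdiv : ∀ x ∈ I, ((D - x ^ 2) / 4).toNat.divisors.card ≤
      2 * ((Finset.Ioc 0 D).bipartiteAbove r x).card := by
    intro x hx
    obtain ⟨-, hlt, hmod⟩ := Finset.mem_filter.mp hx
    obtain ⟨n, hn⟩ : ∃ n : ℕ, D - x ^ 2 = 4 * n := ⟨((D - x ^ 2) / 4).toNat, by omega⟩
    have hnD : n ≤ D := by have := sq_nonneg x; omega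
    have hquot : ((D - x ^ 2) / 4).toNat = n := by
      rw [hn, Int.mul_ediv_cancel_left _ four_ne_zero, Int.toNat_natCast]
    rw [hquot]
    refine (card_divisors_le_two_mul_card_filter n).trans ?_
    gcongr
    intro a ha
    obtain ⟨ha, han⟩ := Finset.mem_filter.mp ha
    simp only [Finset.mem_bipartiteAbove, Finset.mem_Ioc, r, hn]
    refine ⟨⟨Nat.pos_of_mem_divisors ha, (Nat.divisor_le ha).trans hnD⟩, ?_, ?_⟩
    · exact mul_dvd_mul_left 4 (Int.natCast_dvd_natCast.mpr (Nat.dvd_of_mem_divisors ha))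
    · exact_mod_cast Nat.mul_le_mul_left 4 han
  calc _ ≤ ∑ x ∈ I, 2 * ((Finset.Ioc 0 D).bipartiteAbove r x).card := Finset.sum_le_sum hdiv
    _ = 2 * ∑ a ∈ Finset.Ioc 0 D, (I.bipartiteBelow r a).card := by
        rw [← Finset.mul_sum, Finset.sum_card_bipartiteAbove_eq_sum_card_bipartiteBelow]
    _ ≤ _ := by
        gcongr with a ha
        exact card_le_two_pow_mul_levelCount hD (by grind) fun x hx => (Finset.mem_filter.mp hx).2

/-- The squarefree positive integers up to `N`. -/
def squarefreeUpTo (N : ℕ) : Finset ℕ := (Finset.Ioc 0 N).filter Squarefree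

lemma mem_squarefreeUpTo {m N : ℕ} : m ∈ squarefreeUpTo N ↔ (0 < m ∧ m ≤ N) ∧ Squarefree m := by
  rw [squarefreeUpTo, Finset.mem_filter, Finset.mem_Ioc]

lemma two_pow_card_primeFactors {a : ℕ} (ha : a ≠ 0) :
    2 ^ a.primeFactors.card = (a.divisors.filter Squarefree).card := by
  have h := Nat.sum_divisors_filter_squarefree ha (f := fun _ => 1)
  rw [Finset.sum_const, Finset.sum_const, smul_eq_mul, smul_eq_mul, mul_one, mul_one,
    Finset.card_powerset] at h
  rw [h, Nat.primeFactors, Nat.factors_eq]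
  rfl

lemma sum_two_pow_card_primeFactors_mul (g : ℕ → ℕ) (N : ℕ) :
    ∑ a ∈ Finset.Ioc 0 N, 2 ^ a.primeFactors.card * g a =
      ∑ m ∈ squarefreeUpTo N, ∑ n ∈ Finset.Ioc 0 (N / m), g (m * n) := by
  have hdiv : ∀ a ∈ Finset.Ioc 0 N, 2 ^ a.primeFactors.card * g a =
      ∑ m ∈ squarefreeUpTo N with m ∣ a, g a := by
    intro a ha
    rw [Finset.mem_Ioc] at ha
    rw [Finset.sum_const, smul_eq_mul, two_pow_card_primeFactors ha.1.ne']
    congr 2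
    ext m
    simp only [Finset.mem_filter, Nat.mem_divisors, mem_squarefreeUpTo]
    constructor
    · rintro ⟨⟨hma, -⟩, hm⟩
      exact ⟨⟨⟨Nat.pos_of_dvd_of_pos hma ha.1, (Nat.le_of_dvd ha.1 hma).trans ha.2⟩, hm⟩, hma⟩
    · rintro ⟨⟨-, hm⟩, hma⟩
      exact ⟨⟨hma, ha.1.ne'⟩, hm⟩
  rw [Finset.sum_congr rfl hdiv]
  simp only [Finset.sum_filter]
  rw [Finset.sum_comm]
  refine Finset.sum_congr rfl fun m hm => ?_
  have hm0 : 0 < m := (mem_squarefreeUpTo.mp hm).1.1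
  rw [← Finset.sum_filter]
  refine (Finset.sum_nbij (m * ·) ?_ (mul_right_injective₀ hm0.ne').injOn ?_ fun _ _ => rfl).symm
  · intro n hn
    rw [Finset.mem_Ioc, Nat.le_div_iff_mul_le hm0] at hn
    simp only [Finset.mem_filter, Finset.mem_Ioc]
    exact ⟨⟨by have := hn.1; positivity, by rw [mul_comm]; exact hn.2⟩, dvd_mul_right m n⟩
  · rintro _ ha
    simp only [Finset.coe_filter, Finset.mem_Ioc, Set.mem_ofPred_eq] at ha
    obtain ⟨⟨h0, hN⟩, n, rfl⟩ := ha
    refine ⟨n, ?_, rfl⟩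
    rw [Finset.mem_coe, Finset.mem_Ioc, Nat.le_div_iff_mul_le hm0, mul_comm n]
    exact ⟨Nat.pos_of_mul_pos_left h0, hN⟩

/-- The number of pairs `(n, k)` of natural numbers with `0 < n` and `n ^ 2 * (k ^ 2 + 4) ≤ x`. -/
def levelSum (x : ℕ) : ℕ := ∑ n ∈ Finset.Ioc 0 (Nat.sqrt (x / 4)), levelCount (x / n ^ 2)

lemma le_sqrt_div_iff {n c x : ℕ} (hc : 0 < c) : n ≤ Nat.sqrt (x / c) ↔ c * n ^ 2 ≤ x := by
  rw [Nat.le_sqrt', Nat.le_div_iff_mul_le hc, mul_comm]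

lemma levelCount_div_sq_eq_zero {n x : ℕ} (hn : Nat.sqrt (x / 4) < n) :
    levelCount (x / n ^ 2) = 0 := by
  rw [← not_le, le_sqrt_div_iff four_pos, not_le] at hn
  rw [levelCount, if_neg]
  rw [Nat.le_div_iff_mul_le (by nlinarith)]
  omega

lemma sum_levelCount_le (x N : ℕ) :
    ∑ n ∈ Finset.Ioc 0 N, levelCount (x / n ^ 2) ≤ levelSum x := by
  refine Finset.sum_le_sum_of_ne_zero fun n hn hne => ?_
  rw [Finset.mem_Ioc] at hn ⊢
  exact ⟨hn.1, not_lt.mp (mt levelCount_div_sq_eq_zero hne)⟩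

lemma sum_two_pow_mul_levelCount_le (D N : ℕ) :
    ∑ a ∈ Finset.Ioc 0 N, 2 ^ a.primeFactors.card * levelCount (D / a ^ 2) ≤
      ∑ m ∈ squarefreeUpTo (Nat.sqrt (D / 4)), levelSum (D / m ^ 2) := by
  rw [sum_two_pow_card_primeFactors_mul]
  simp only [mul_pow, ← Nat.div_div_eq_div_mul]
  refine (Finset.sum_le_sum fun m _ => sum_levelCount_le _ _).trans
    (Finset.sum_le_sum_of_ne_zero fun m hm hne => ?_)
  rw [mem_squarefreeUpTo] at hm ⊢
  refine ⟨⟨hm.1.1, ?_⟩, hm.2⟩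
  by_contra! h
  rw [← not_le, le_sqrt_div_iff four_pos,
    ← Nat.le_div_iff_mul_le (by have := hm.1.1; positivity)] at h
  exact hne (by rw [levelSum, Nat.div_eq_of_lt (not_le.mp h)]; rfl)

/-! ### The lattice-point count -/

lemma levelCount_mono : Monotone levelCount := fun _ _ h =>
  le_of_forall_lt fun _ hk => lt_levelCount_iff.mpr ((lt_levelCount_iff.mp hk).trans h)

lemma levelSum_mono : Monotone levelSum := fun _ _ h =>
  (Finset.sum_le_sum_of_subset (Finset.Ioc_subset_Ioc_right
      (Nat.sqrt_le_sqrt (Nat.div_le_div_right h)))).trans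
    (Finset.sum_le_sum fun _ _ => levelCount_mono (Nat.div_le_div_right h))

section HyperbolaMethod

lemma card_filter_mul_sq_le {c x N : ℕ} (hc : 0 < c) (hN : Nat.sqrt (x / c) ≤ N) :
    (Finset.Ioc 0 N).filter (fun n => c * n ^ 2 ≤ x) = Finset.Ioc 0 (Nat.sqrt (x / c)) := by
  ext n
  rw [Finset.mem_filter, Finset.mem_Ioc, Finset.mem_Ioc, ← le_sqrt_div_iff hc]
  omega

lemma levelCount_eq_sum_add (K x : ℕ) :
    levelCount x = ∑ k ∈ Finset.range K, (if k ^ 2 + 4 ≤ x then 1 else 0) + (levelCount x - K) := by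
  have hcard : ((Finset.range K).filter fun k => k ^ 2 + 4 ≤ x) =
      Finset.range (min K (levelCount x)) := by
    ext k
    rw [Finset.mem_filter, ← lt_levelCount_iff, Finset.mem_range, Finset.mem_range, lt_min_iff]
  rw [← Finset.card_filter, hcard, Finset.card_range]
  omega

lemma levelSum_eq_sum_add (K x : ℕ) :
    levelSum x = ∑ k ∈ Finset.range K, Nat.sqrt (x / (k ^ 2 + 4)) +
      ∑ n ∈ Finset.Ioc 0 (Nat.sqrt (x / (K ^ 2 + 4))), (levelCount (x / n ^ 2) - K) := by
  have hN (k : ℕ) : Nat.sqrt (x / (k ^ 2 + 4)) ≤ Nat.sqrt (x / 4) :=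
    Nat.sqrt_le_sqrt (Nat.div_le_div_left (by omega) four_pos)
  have hiff {k n : ℕ} (hn : n ∈ Finset.Ioc 0 (Nat.sqrt (x / 4))) :
      k ^ 2 + 4 ≤ x / n ^ 2 ↔ (k ^ 2 + 4) * n ^ 2 ≤ x := by
    have := (Finset.mem_Ioc.mp hn).1
    rw [Nat.le_div_iff_mul_le (by positivity)]
  unfold levelSum
  rw [Finset.sum_congr rfl fun n _ => levelCount_eq_sum_add K (x / n ^ 2), Finset.sum_add_distrib,
    Finset.sum_comm]
  congr 1
  · refine Finset.sum_congr rfl fun k _ => ?_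
    rw [← Finset.card_filter, Finset.filter_congr fun n hn => hiff hn,
      card_filter_mul_sq_le (by positivity) (hN k), Nat.card_Ioc, Nat.sub_zero]
  · rw [← card_filter_mul_sq_le (by positivity) (hN K), Finset.sum_filter_of_ne]
    intro n hn hne
    rw [← hiff hn]
    exact lt_levelCount_iff.mp (by omega)

lemma levelCount_div_sq_le {x n : ℕ} (hn : 0 < n) (hx : 4 * n ^ 2 ≤ x) :
    (levelCount (x / n ^ 2) : ℝ) ≤ √x / n - 2 * n / √x + 1 := by
  have h4 : 4 ≤ x / n ^ 2 := (Nat.le_div_iff_mul_le (by positivity)).mpr hx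
  have hn' : (0 : ℝ) < n := by exact_mod_cast hn
  have hx' : 4 * (n : ℝ) ^ 2 ≤ x := by exact_mod_cast hx
  have hx0 : (0 : ℝ) < √x := Real.sqrt_pos.mpr (by nlinarith)
  have hsq : √(x : ℝ) ^ 2 = x := Real.sq_sqrt (by positivity)
  rw [levelCount, if_pos h4, Nat.cast_succ, add_le_add_iff_right]
  refine Real.nat_sqrt_le_real_sqrt.trans (Real.sqrt_le_iff.mpr ⟨?_, ?_⟩)
  · rw [sub_nonneg, div_le_div_iff₀ hx0 hn']
    nlinarith
  · have hfloor : ((x / n ^ 2 : ℕ) : ℝ) ≤ √x ^ 2 / n ^ 2 := by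
      rw [hsq]
      exact_mod_cast Nat.cast_div_le
    have hexpand : (√x / n - 2 * n / √x) ^ 2 =
        √x ^ 2 / (n : ℝ) ^ 2 - 4 + (2 * n / √x) ^ 2 := by
      field_simp
      ring
    rw [hexpand, Nat.cast_sub h4]
    push_cast
    linarith [sq_nonneg (2 * n / √(x : ℝ))]

lemma sum_levelCount_sub_le {K N x : ℕ} (hN : (K ^ 2 + 4) * N ^ 2 ≤ x) :
    ((∑ n ∈ Finset.Ioc 0 N, (levelCount (x / n ^ 2) - K) : ℕ) : ℝ) ≤
      √x * harmonic N - N * (N + 1) / √x - (K - 1) * N := by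
  have hterm : ∀ n ∈ Finset.Ioc 0 N, ((levelCount (x / n ^ 2) - K : ℕ) : ℝ) ≤
      √x * (n : ℝ)⁻¹ - n * (2 / √x) - (K - 1) := by
    intro n hn
    rw [Finset.mem_Ioc] at hn
    have hnx : (K ^ 2 + 4) * n ^ 2 ≤ x :=
      (Nat.mul_le_mul_left _ (Nat.pow_le_pow_left hn.2 2)).trans hN
    have hK : K ≤ levelCount (x / n ^ 2) := by
      refine (lt_levelCount_iff.mpr ?_).le
      rwa [Nat.le_div_iff_mul_le (by have := hn.1; positivity)]
    have := levelCount_div_sq_le hn.1 ((Nat.mul_le_mul_right _ (by omega)).trans hnx)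
    rw [Nat.cast_sub hK]
    rw [div_eq_mul_inv, mul_div_right_comm, mul_comm _ (n : ℝ)] at this
    linarith
  have hgauss (M : ℕ) : ∑ n ∈ Finset.Ioc 0 M, (n : ℝ) = M * (M + 1) / 2 := by
    induction M with
    | zero => simp
    | succ M ih =>
      rw [Finset.sum_Ioc_succ_top M.zero_le, ih]
      push_cast
      ring
  have hharm : ∑ n ∈ Finset.Ioc 0 N, ((n : ℝ))⁻¹ = harmonic N := by
    rw [harmonic_eq_sum_Icc]
    push_cast
    rfl
  rw [Nat.cast_sum]
  refine (Finset.sum_le_sum hterm).trans_eq ?_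
  rw [Finset.sum_sub_distrib, Finset.sum_sub_distrib, ← Finset.mul_sum, ← Finset.sum_mul, hgauss,
    hharm, Finset.sum_const, Nat.card_Ioc, Nat.sub_zero, nsmul_eq_mul]
  ring

lemma harmonic_le_log_add {N : ℕ} (hN : 16 ≤ N) : (harmonic N : ℝ) ≤ Real.log N + 0.6082 := by
  have hanti := Real.strictAnti_eulerMascheroniSeq'.antitone hN
  simp only [Real.eulerMascheroniSeq'] at hanti
  rw [if_neg (by omega), if_neg (by norm_num)] at hanti
  have h16 : (harmonic 16 : ℝ) ≤ 3.38073 := by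
    norm_num [harmonic, Finset.sum_range_succ]
  have hlog : Real.log (16 : ℕ) = 4 * Real.log 2 := by
    rw [show ((16 : ℕ) : ℝ) = 2 ^ 4 by norm_num, Real.log_pow]
    norm_num
  rw [hlog] at hanti
  linarith [Real.log_two_gt_d9]

lemma mul_log_le {y Y : ℝ} (hy : 0 < y) (hY : 0 < Y) :
    Y * Real.log y ≤ Y * Real.log Y - Y + y := by
  have h := Real.log_le_sub_one_of_pos (div_pos hy hY)
  rw [Real.log_div hy.ne' hY.ne'] at h
  have := mul_le_mul_of_nonneg_left h hY.le
  rw [mul_sub, mul_sub, mul_div_cancel₀ _ hY.ne'] at this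
  linarith

lemma sqrt_div_le_mul_sqrt {x c : ℕ} {q : ℝ} (hq : 0 ≤ q) (hc : 1 ≤ q ^ 2 * c) :
    (Nat.sqrt (x / c) : ℝ) ≤ q * √x := by
  have hc0 : (0 : ℝ) < c := by
    by_contra! h
    nlinarith [sq_nonneg q]
  refine Real.nat_sqrt_le_real_sqrt.trans (Real.sqrt_le_iff.mpr ⟨by positivity, ?_⟩)
  rw [mul_pow, Real.sq_sqrt (by positivity)]
  refine Nat.cast_div_le.trans ?_
  rw [div_le_iff₀ hc0]
  nlinarith

lemma sum_range_eight_sqrt_le (x : ℕ) :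
    ((∑ k ∈ Finset.range 8, Nat.sqrt (x / (k ^ 2 + 4)) : ℕ) : ℝ) ≤ 2.2829 * √x := by
  have h0 : (Nat.sqrt (x / (0 ^ 2 + 4)) : ℝ) ≤ 0.5 * √x :=
    sqrt_div_le_mul_sqrt (by norm_num) (by norm_num)
  have h1 : (Nat.sqrt (x / (1 ^ 2 + 4)) : ℝ) ≤ 0.447214 * √x :=
    sqrt_div_le_mul_sqrt (by norm_num) (by norm_num)
  have h2 : (Nat.sqrt (x / (2 ^ 2 + 4)) : ℝ) ≤ 0.353554 * √x :=
    sqrt_div_le_mul_sqrt (by norm_num) (by norm_num)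
  have h3 : (Nat.sqrt (x / (3 ^ 2 + 4)) : ℝ) ≤ 0.277351 * √x :=
    sqrt_div_le_mul_sqrt (by norm_num) (by norm_num)
  have h4 : (Nat.sqrt (x / (4 ^ 2 + 4)) : ℝ) ≤ 0.223607 * √x :=
    sqrt_div_le_mul_sqrt (by norm_num) (by norm_num)
  have h5 : (Nat.sqrt (x / (5 ^ 2 + 4)) : ℝ) ≤ 0.185696 * √x :=
    sqrt_div_le_mul_sqrt (by norm_num) (by norm_num)
  have h6 : (Nat.sqrt (x / (6 ^ 2 + 4)) : ℝ) ≤ 0.158114 * √x :=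
    sqrt_div_le_mul_sqrt (by norm_num) (by norm_num)
  have h7 : (Nat.sqrt (x / (7 ^ 2 + 4)) : ℝ) ≤ 0.137361 * √x :=
    sqrt_div_le_mul_sqrt (by norm_num) (by norm_num)
  simp only [Finset.sum_range_succ, Finset.sum_range_zero, zero_add, Nat.cast_add]
  linarith

lemma levelSum_le_of_large {x : ℕ} (hx : 17408 ≤ x) :
    (levelSum x : ℝ) ≤ √x * (Real.log x / 2 - 0.08) := by
  set N := Nat.sqrt (x / 68) with hNdef
  set Y : ℝ := √x with hYdef
  have hN : 16 ≤ N := (le_sqrt_div_iff (by norm_num)).mpr (by omega)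
  have hY : 0 < Y := Real.sqrt_pos.mpr (by positivity)
  have hYsq : Y ^ 2 = x := Real.sq_sqrt (by positivity)
  have hlogY : Real.log Y = Real.log x / 2 := Real.log_sqrt (by positivity)
  have hNle : (68 : ℝ) * N ^ 2 ≤ Y ^ 2 := by
    rw [hYsq]
    exact_mod_cast (le_sqrt_div_iff (by norm_num)).mp hNdef.le
  have hN' : (16 : ℝ) ≤ N := by exact_mod_cast hN
  have h68 : 8 ^ 2 + 4 = 68 := by norm_num
  have hsplit : (levelSum x : ℝ) ≤
      2.2829 * Y + (Y * harmonic N - N * (N + 1) / Y - 7 * N) := by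
    rw [levelSum_eq_sum_add 8, Nat.cast_add]
    refine add_le_add (sum_range_eight_sqrt_le x) ?_
    refine (sum_levelCount_sub_le (by exact_mod_cast hNle.trans_eq hYsq)).trans_eq ?_
    rw [h68, ← hNdef, ← hYdef]
    norm_num
  have hlog : Y * Real.log N ≤ Y * Real.log Y - Y * (3 * Real.log 2) - Y + 8 * N := by
    have := mul_log_le (y := 8 * N) (by positivity) hY
    rw [Real.log_mul (by norm_num) (by positivity), show (8 : ℝ) = 2 ^ 3 by norm_num,
      Real.log_pow] at this
    push_cast at this
    linarith
  have hquad : N - N * (N + 1) / Y ≤ 0.1066 * Y := by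
    have hNc : N ≤ 0.12127 * Y := abs_le_of_sq_le_sq' (by nlinarith) (by positivity) |>.2
    rw [sub_le_iff_le_add, ← sub_le_iff_le_add', le_div_iff₀ hY]
    nlinarith [mul_nonneg (sub_nonneg.mpr hNc) (by linarith : 0 ≤ 0.87873 * Y - N)]
  have hharm := mul_le_mul_of_nonneg_left (harmonic_le_log_add hN) hY.le
  have hlog2 := mul_le_mul_of_nonneg_left Real.log_two_gt_d9.le hY.le
  rw [← hlogY]
  linarith

end HyperbolaMethod

/-- An inequality between natural numbers certifying `a / 10 ^ 6 ≤ log x`: the exponent of `2`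
exceeds `128 * a / 693147`, where `0.693147 ≤ log 2`. -/
def LogCertificate (a x : ℕ) : Prop := 2 ^ (128 * a / 693147 + 1) ≤ x ^ 128

instance (a x : ℕ) : Decidable (LogCertificate a x) := inferInstanceAs (Decidable (_ ≤ _))

lemma LogCertificate.le_log {a x : ℕ} (h : LogCertificate a x) :
    (a : ℝ) / 10 ^ 6 ≤ Real.log x := by
  have hpow : (2 : ℝ) ^ (128 * a / 693147 + 1) ≤ (x : ℝ) ^ 128 := by exact_mod_cast h
  have hlog := Real.log_le_log (by positivity) hpow
  rw [Real.log_pow, Real.log_pow] at hlog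
  have hfloor : (128 * a : ℝ) ≤ 693147 * (128 * a / 693147 + 1 : ℕ) := by
    exact_mod_cast (Nat.lt_mul_div_succ (128 * a) (by norm_num)).le
  push_cast at hlog hfloor ⊢
  nlinarith [Real.log_two_gt_d9]

/-- The left endpoints of intervals `[E, E + E / 40]` covering the integers from `4` on. -/
def gridPoint : ℕ → ℕ
  | 0 => 4
  | i + 1 => gridPoint i + gridPoint i / 40 + 1

/-- A certificate for `levelSum x ≤ √x * (log x / 2 - 0.08) + 1` on `[E, E + E / 40]`: it compares
the value of `levelSum` at the right endpoint with the right-hand side at the left endpoint. -/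
def GridCertificate (E : ℕ) : Prop :=
  LogCertificate
    (2 * (10 ^ 10 * (levelSum (E + E / 40) - 1) / Nat.sqrt (10 ^ 8 * E) + 1) + 160000) E

instance (E : ℕ) : Decidable (GridCertificate E) := inferInstanceAs (Decidable (LogCertificate _ _))

lemma GridCertificate.levelSum_le {E x : ℕ} (h : GridCertificate E) (hE : 0 < E) (hEx : E ≤ x)
    (hxE : x ≤ E + E / 40) : (levelSum x : ℝ) ≤ √x * (Real.log x / 2 - 0.08) + 1 := by
  set f := levelSum (E + E / 40)
  set q := 10 ^ 10 * (f - 1) / Nat.sqrt (10 ^ 8 * E) + 1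
  have : (0 : ℝ) < E := by exact_mod_cast hE
  have hlog : (q : ℝ) / 10 ^ 6 ≤ Real.log E / 2 - 0.08 := by
    have : ((2 * q + 160000 : ℕ) : ℝ) / 10 ^ 6 ≤ Real.log E := LogCertificate.le_log h
    push_cast at this
    linarith
  have hsqrt : (Nat.sqrt (10 ^ 8 * E) : ℝ) ≤ 10 ^ 4 * √E := by
    refine Real.nat_sqrt_le_real_sqrt.trans_eq ?_
    rw [Nat.cast_mul, Real.sqrt_mul (by positivity), Nat.cast_pow,
      show ((10 : ℕ) : ℝ) ^ 8 = (10 ^ 4) ^ 2 by norm_num, Real.sqrt_sq (by positivity)]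
  have hq : (10 : ℝ) ^ 10 * (f - 1 : ℕ) ≤ Nat.sqrt (10 ^ 8 * E) * q := by
    exact_mod_cast (Nat.lt_mul_div_succ _ (Nat.sqrt_pos.mpr (by positivity))).le
  have hf : (f : ℝ) ≤ (f - 1 : ℕ) + 1 := by exact_mod_cast Nat.le_add_of_sub_le le_rfl
  calc (levelSum x : ℝ) ≤ f := by exact_mod_cast levelSum_mono hxE
    _ ≤ √E * (q / 10 ^ 6) + 1 := by nlinarith
    _ ≤ √x * (Real.log x / 2 - 0.08) + 1 := by
        gcongr
        refine hlog.trans ?_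
        gcongr

lemma exists_gridPoint_le {n x : ℕ} (hx : 4 ≤ x) (hn : x < gridPoint n) :
    ∃ i ∈ Finset.range n, gridPoint i ≤ x ∧ x ≤ gridPoint i + gridPoint i / 40 := by
  induction n with
  | zero => exact absurd hn (not_lt.mpr hx)
  | succ n ih =>
    rcases lt_or_ge x (gridPoint n) with h | h
    · obtain ⟨i, hi, hix⟩ := ih h
      exact ⟨i, Finset.mem_range.mpr ((Finset.mem_range.mp hi).trans n.lt_succ_self), hix⟩
    · exact ⟨n, Finset.self_mem_range_succ n, h, Nat.lt_succ_iff.mp hn⟩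

set_option maxRecDepth 10000 in
lemma gridCertificate_gridPoint : ∀ i ∈ Finset.range 265, GridCertificate (gridPoint i) := by
  decide +kernel

lemma lt_gridPoint : 17408 < gridPoint 265 := by decide +kernel

lemma levelSum_le {x : ℕ} (hx : 4 ≤ x) :
    (levelSum x : ℝ) ≤ √x * (Real.log x / 2 - 0.08) + 1 := by
  rcases le_or_gt 17408 x with hlarge | hsmall
  · exact (levelSum_le_of_large hlarge).trans (le_add_of_nonneg_right zero_le_one)
  · obtain ⟨i, hi, hix, hxi⟩ := exists_gridPoint_le hx (hsmall.trans lt_gridPoint)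
    have hpos : 0 < gridPoint i := by cases i <;> simp [gridPoint]
    exact (gridCertificate_gridPoint i hi).levelSum_le hpos hix hxi

/-! ### Squarefree integers -/

/-- The density `6 / π ^ 2` of the squarefree integers. -/
noncomputable def squarefreeDensity : ℝ := 6 / Real.pi ^ 2

lemma squarefreeDensity_pos : 0 < squarefreeDensity := by
  have := Real.pi_pos
  unfold squarefreeDensity
  positivity

lemma lt_squarefreeDensity : 0.6079266 < squarefreeDensity := by
  rw [squarefreeDensity, lt_div_iff₀ (by have := Real.pi_pos; positivity)]
  nlinarith [Real.pi_lt_d6, Real.pi_pos]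

lemma squarefreeDensity_lt : squarefreeDensity < 0.6079275 := by
  rw [squarefreeDensity, div_lt_iff₀ (by have := Real.pi_pos; positivity)]
  nlinarith [Real.pi_gt_d6]

section SquarefreeCount

open ArithmeticFunction

lemma hasSum_moebius_div_sq :
    HasSum (fun d : ℕ => (moebius d : ℝ) / (d : ℝ) ^ 2) squarefreeDensity := by
  have hs : 1 < (2 : ℂ).re := by norm_num
  have hsum := (LSeriesSummable_moebius_iff.mpr hs).LSeriesHasSum
  have hzeta := LSeries_zeta_mul_Lseries_moebius hs
  rw [LSeries_zeta_eq_riemannZeta hs, riemannZeta_two] at hzeta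
  have hpi : (Real.pi : ℂ) ≠ 0 := by exact_mod_cast Real.pi_ne_zero
  have hvalue : LSeries (fun n => ((moebius n : ℤ) : ℂ)) 2 = (squarefreeDensity : ℂ) := by
    rw [squarefreeDensity]
    push_cast
    field_simp at hzeta ⊢
    linear_combination hzeta
  rw [hvalue, LSeriesHasSum] at hsum
  rw [← Complex.hasSum_ofReal]
  convert hsum using 2 with d
  rw [LSeries.term_def]
  split_ifs with hd
  · simp [hd]
  · push_cast
    rw [Complex.cpow_ofNat]

lemma sum_moebius_div_sq_le {s : ℕ} (hs : s ≠ 0) :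
    ∑ d ∈ Finset.Ioc 0 s, (moebius d : ℝ) / (d : ℝ) ^ 2 ≤ squarefreeDensity + (s : ℝ)⁻¹ := by
  rw [← sub_le_iff_le_add]
  refine ge_of_tendsto
    (hasSum_moebius_div_sq.tendsto_sum_nat.comp (Filter.tendsto_add_atTop_nat 1)) ?_
  filter_upwards [Filter.eventually_ge_atTop s] with m hm
  have hsplit : ∑ d ∈ Finset.range (m + 1), (moebius d : ℝ) / (d : ℝ) ^ 2 =
      ∑ d ∈ Finset.Ioc 0 s, (moebius d : ℝ) / (d : ℝ) ^ 2 +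
        ∑ d ∈ Finset.Ioc s m, (moebius d : ℝ) / (d : ℝ) ^ 2 := by
    rw [Finset.sum_Ioc_consecutive _ s.zero_le hm, Finset.range_eq_Ico,
      Finset.sum_eq_sum_Ico_succ_bot m.succ_pos, Nat.cast_zero, zero_pow two_ne_zero, div_zero,
      zero_add]
    rfl
  have htail : -∑ d ∈ Finset.Ioc s m, ((d : ℝ) ^ 2)⁻¹ ≤
      ∑ d ∈ Finset.Ioc s m, (moebius d : ℝ) / (d : ℝ) ^ 2 := by
    rw [← Finset.sum_neg_distrib]
    refine Finset.sum_le_sum fun d _ => ?_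
    have hmu : (-1 : ℝ) ≤ moebius d := by exact_mod_cast (abs_le.mp abs_moebius_le_one).1
    rw [div_eq_mul_inv, neg_eq_neg_one_mul]
    gcongr
  have hinv : ∑ d ∈ Finset.Ioc s m, ((d : ℝ) ^ 2)⁻¹ ≤ (s : ℝ)⁻¹ :=
    (sum_Ioc_inv_sq_le_sub hs hm).trans (sub_le_self _ (by positivity))
  rw [Function.comp_apply, hsplit]
  linarith

lemma sq_dvd_sq_mul_iff {a b d : ℕ} (ha : Squarefree a) (hb : b ≠ 0) :
    d ^ 2 ∣ b ^ 2 * a ↔ d ∣ b := by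
  refine ⟨fun h => ?_, fun h => (pow_dvd_pow_of_dvd h 2).mul_right a⟩
  have hba : b ^ 2 * a ≠ 0 := mul_ne_zero (pow_ne_zero 2 hb) ha.ne_zero
  have hd : d ≠ 0 := by
    rintro rfl
    exact hba (zero_dvd_iff.mp (by simpa using h))
  rw [← Nat.factorization_le_iff_dvd hd hb]
  rw [← Nat.factorization_le_iff_dvd (pow_ne_zero 2 hd) hba] at h
  intro p
  have hp := h p
  rw [Nat.factorization_mul (pow_ne_zero 2 hb) ha.ne_zero] at hp
  simp only [Nat.factorization_pow, Finsupp.coe_add, Finsupp.coe_smul, Pi.add_apply,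
    Pi.smul_apply, smul_eq_mul] at hp
  have := ha.natFactorization_le_one p
  omega

lemma sum_moebius_filter_sq_dvd {n s : ℕ} (hn : n ≠ 0) (hns : n < (s + 1) ^ 2) :
    ∑ d ∈ (Finset.Ioc 0 s).filter (fun d => d ^ 2 ∣ n), moebius d =
      if Squarefree n then 1 else 0 := by
  obtain ⟨a, b, rfl, ha⟩ := Nat.sq_mul_squarefree n
  have hb : b ≠ 0 := by
    rintro rfl
    simp at hn
  have hbs : b ≤ s := by
    have : b ^ 2 < (s + 1) ^ 2 := (Nat.le_mul_of_pos_right _ ha.ne_zero.bot_lt).trans_lt hns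
    exact Nat.lt_succ_iff.mp (lt_of_pow_lt_pow_left₀ 2 (Nat.zero_le _) this)
  have hdivisors : (Finset.Ioc 0 s).filter (fun d => d ^ 2 ∣ b ^ 2 * a) = b.divisors := by
    ext d
    rw [Finset.mem_filter, Finset.mem_Ioc, Nat.mem_divisors, sq_dvd_sq_mul_iff ha hb]
    exact ⟨fun h => ⟨h.2, hb⟩, fun h => ⟨⟨Nat.pos_of_dvd_of_pos h.1 hb.bot_lt,
      (Nat.le_of_dvd hb.bot_lt h.1).trans hbs⟩, h.1⟩⟩
  have hsq : Squarefree (b ^ 2 * a) ↔ b = 1 := by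
    refine ⟨fun h => by simpa using h b ⟨a, by ring⟩, ?_⟩
    rintro rfl
    simpa using ha
  have hmoebius := congrArg (· b) moebius_mul_coe_zeta
  simp only [coe_mul_zeta_apply, one_apply] at hmoebius
  rw [hdivisors, hmoebius]
  simp only [hsq]

lemma card_squarefreeUpTo_eq {N s : ℕ} (hNs : N < (s + 1) ^ 2) :
    ((squarefreeUpTo N).card : ℤ) = ∑ d ∈ Finset.Ioc 0 s, moebius d * (N / d ^ 2 : ℕ) := by
  calc ((squarefreeUpTo N).card : ℤ)
      = ∑ n ∈ Finset.Ioc 0 N, ∑ d ∈ (Finset.Ioc 0 s).filter (fun d => d ^ 2 ∣ n), moebius d := by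
        rw [squarefreeUpTo, Finset.card_filter, Nat.cast_sum]
        refine Finset.sum_congr rfl fun _ hn => ?_
        rw [Finset.mem_Ioc] at hn
        rw [sum_moebius_filter_sq_dvd (by omega) (by omega)]
        push_cast
        rfl
    _ = ∑ d ∈ Finset.Ioc 0 s, ∑ _n ∈ (Finset.Ioc 0 N).filter (fun n => d ^ 2 ∣ n), moebius d := by
        simp only [Finset.sum_filter]
        rw [Finset.sum_comm]
    _ = ∑ d ∈ Finset.Ioc 0 s, moebius d * (N / d ^ 2 : ℕ) := by
        refine Finset.sum_congr rfl fun d _ => ?_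
        rw [Finset.sum_const, Nat.Ioc_filter_dvd_card_eq_div, nsmul_eq_mul, mul_comm]

lemma moebius_mul_floor_le (N : ℕ) {d : ℕ} (hd : d ≠ 0) :
    (moebius d : ℝ) * (N / d ^ 2 : ℕ) ≤ N * ((moebius d : ℝ) / (d : ℝ) ^ 2) + 1 := by
  have hd2 : 0 < d ^ 2 := by positivity
  have hmu : (-1 : ℝ) ≤ moebius d := by exact_mod_cast (abs_le.mp abs_moebius_le_one).1
  have hle : ((N / d ^ 2 : ℕ) : ℝ) ≤ N / (d : ℝ) ^ 2 := by exact_mod_cast Nat.cast_div_le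
  have hlt : (N : ℝ) / (d : ℝ) ^ 2 < (N / d ^ 2 : ℕ) + 1 := by
    rw [div_lt_iff₀ (by positivity), mul_comm]
    exact_mod_cast Nat.lt_mul_div_succ N hd2
  rw [mul_div_left_comm]
  nlinarith [mul_nonneg (sub_nonneg.mpr hle) (neg_le_iff_add_nonneg.mp hmu)]

lemma card_squarefreeUpTo_le (N : ℕ) :
    ((squarefreeUpTo N).card : ℝ) ≤ squarefreeDensity * N + 2 * √N + 1 := by
  rcases Nat.eq_zero_or_pos N with rfl | hN
  · simp [squarefreeUpTo]
  set s := Nat.sqrt N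
  have hs : s ≠ 0 := (Nat.sqrt_pos.mpr hN).ne'
  have hs1 : (1 : ℝ) ≤ s := by exact_mod_cast Nat.one_le_iff_ne_zero.mpr hs
  have hsN : (s : ℝ) ≤ √N := Real.nat_sqrt_le_real_sqrt
  have hNs : √(N : ℝ) ≤ s + 1 := Real.real_sqrt_le_nat_sqrt_succ
  have hcard : ((squarefreeUpTo N).card : ℝ) =
      ∑ d ∈ Finset.Ioc 0 s, (moebius d : ℝ) * (N / d ^ 2 : ℕ) := by
    have := congrArg (Int.cast : ℤ → ℝ) (card_squarefreeUpTo_eq (Nat.lt_succ_sqrt' N))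
    simpa only [Int.cast_sum, Int.cast_mul, Int.cast_natCast] using this
  have hsqrt : N * (s : ℝ)⁻¹ + s ≤ 2 * √N + 1 := by
    have hsq : √(N : ℝ) ^ 2 = N := Real.sq_sqrt (by positivity)
    rw [← div_eq_mul_inv, ← le_sub_iff_add_le, div_le_iff₀ (by positivity)]
    nlinarith
  calc ((squarefreeUpTo N).card : ℝ)
      ≤ ∑ d ∈ Finset.Ioc 0 s, (N * ((moebius d : ℝ) / (d : ℝ) ^ 2) + 1) := by
        rw [hcard]
        exact Finset.sum_le_sum fun d hd => moebius_mul_floor_le N (Finset.mem_Ioc.mp hd).1.ne'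
    _ = N * ∑ d ∈ Finset.Ioc 0 s, (moebius d : ℝ) / (d : ℝ) ^ 2 + s := by
        rw [Finset.sum_add_distrib, ← Finset.mul_sum, Finset.sum_const, Nat.card_Ioc,
          Nat.sub_zero, nsmul_eq_mul, mul_one]
    _ ≤ N * (squarefreeDensity + (s : ℝ)⁻¹) + s := by
        gcongr
        exact sum_moebius_div_sq_le hs
    _ ≤ squarefreeDensity * N + 2 * √N + 1 := by linarith

end SquarefreeCount

/-- The sum of `1 / m` over the squarefree positive integers `m ≤ N`. -/
noncomputable def squarefreeInvSum (N : ℕ) : ℝ := ∑ m ∈ squarefreeUpTo N, (m : ℝ)⁻¹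

lemma sum_squarefreeUpTo_succ {M : Type*} [AddCommMonoid M] (f : ℕ → M) (N : ℕ) :
    ∑ m ∈ squarefreeUpTo (N + 1), f m =
      ∑ m ∈ squarefreeUpTo N, f m + if Squarefree (N + 1) then f (N + 1) else 0 := by
  rw [squarefreeUpTo, squarefreeUpTo, Finset.sum_filter, Finset.sum_filter,
    Finset.sum_Ioc_succ_top N.zero_le]

section Sieve

lemma gcd_pow_eq_gcd_of_squarefree {n : ℕ} (hn : Squarefree n) (k : ℕ) {e : ℕ} (he : e ≠ 0) :
    n.gcd (k ^ e) = n.gcd k := by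
  refine Nat.dvd_antisymm (Nat.dvd_gcd (Nat.gcd_dvd_left _ _) ?_)
    (Nat.gcd_dvd_gcd_of_dvd_right n (dvd_pow_self k he))
  exact ((hn.squarefree_of_dvd (Nat.gcd_dvd_left _ _)).dvd_pow_iff_dvd he).mp
    (Nat.gcd_dvd_right _ _)

/-- The product of the primes below `90`, written out so that the kernel evaluates it at once. -/
def sieveModulus : ℕ :=
  2 * 3 * 5 * 7 * 11 * 13 * 17 * 19 * 23 * 29 * 31 * 37 * 41 * 43 * 47 * 53 * 59 * 61 * 67 * 71 *
    73 * 79 * 83 * 89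

/-- No prime below `90` divides `n` twice: a consequence of squarefreeness which, unlike
squarefreeness itself, the kernel decides with two `gcd`s. -/
def PassesSieve (n : ℕ) : Prop := n.gcd (sieveModulus ^ 2) = n.gcd sieveModulus

instance (n : ℕ) : Decidable (PassesSieve n) := inferInstanceAs (Decidable (_ = _))

lemma passesSieve_of_squarefree {n : ℕ} (hn : Squarefree n) : PassesSieve n :=
  gcd_pow_eq_gcd_of_squarefree hn _ two_ne_zero

/-- An integer upper bound for `10 ^ 12 * squarefreeInvSum N`, each term being rounded up. -/
def sieveInvSum : ℕ → ℕ
  | 0 => 0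
  | n + 1 => sieveInvSum n + if PassesSieve (n + 1) then 10 ^ 12 / (n + 1) + 1 else 0

lemma inv_le_div_add_one {m : ℕ} (hm : 0 < m) :
    (m : ℝ)⁻¹ * 10 ^ 12 ≤ (10 ^ 12 / m + 1 : ℕ) := by
  rw [inv_mul_eq_div, div_le_iff₀ (by exact_mod_cast hm), mul_comm]
  exact_mod_cast (Nat.lt_mul_div_succ (10 ^ 12) hm).le

lemma squarefreeInvSum_mul_le (N : ℕ) : squarefreeInvSum N * 10 ^ 12 ≤ sieveInvSum N := by
  induction N with
  | zero => simp [squarefreeInvSum, squarefreeUpTo]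
  | succ n ih =>
    rw [squarefreeInvSum, sum_squarefreeUpTo_succ, add_mul, sieveInvSum,
      Nat.cast_add (sieveInvSum n)]
    refine add_le_add ih ?_
    split_ifs with hn hsieve hsieve
    · exact inv_le_div_add_one n.succ_pos
    · exact absurd (passesSieve_of_squarefree hn) hsieve
    all_goals rw [zero_mul]; positivity

/-- A certificate for `squarefreeInvSum N ≤ (3 / π ^ 2) * log (N * (N + 1)) + 1.09`, scaled by
`10 ^ 12` and using `0.6079266 < 6 / π ^ 2`. -/
def InvSumCertificate (N : ℕ) : Prop :=
  LogCertificate ((sieveInvSum N - 1090000000000) * 20 / 6079266 + 1) (N * (N + 1))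

instance (N : ℕ) : Decidable (InvSumCertificate N) :=
  inferInstanceAs (Decidable (LogCertificate _ _))

set_option maxRecDepth 100000 in
lemma invSumCertificate_of_mem_Icc : ∀ N ∈ Finset.Icc 8 8192, InvSumCertificate N := by
  decide +kernel

-- `122070312 = ⌊10 ^ 12 / 8192⌋`, so the sum bounds `10 ^ 12 * ∑ (1 / m - 1 / 8192)`.
set_option maxRecDepth 100000 in
lemma sum_passesSieve_le : ∑ m ∈ (Finset.Ioc 0 8192).filter PassesSieve,
    (10 ^ 12 / m + 1 - 122070312) ≤ 5913793998420 := by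
  decide +kernel

lemma InvSumCertificate.squarefreeInvSum_le {N : ℕ} (h : InvSumCertificate N) (hN : 0 < N) :
    squarefreeInvSum N ≤ squarefreeDensity / 2 * (Real.log N + Real.log (N + 1)) + 1.09 := by
  set a := (sieveInvSum N - 1090000000000) * 20 / 6079266 + 1
  have hlog : (a : ℝ) / 10 ^ 6 ≤ Real.log N + Real.log (N + 1) := by
    rw [← Real.log_mul (by positivity) (by positivity)]
    exact_mod_cast h.le_log
  have hquot : ((sieveInvSum N - 1090000000000 : ℕ) : ℝ) * 20 ≤ 6079266 * a := by
    exact_mod_cast (Nat.lt_mul_div_succ _ (by norm_num)).le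
  have htrunc : (sieveInvSum N : ℝ) ≤ (sieveInvSum N - 1090000000000 : ℕ) + 1090000000000 := by
    exact_mod_cast Nat.le_add_of_sub_le le_rfl
  have hdensity : 0.6079266 * ((a : ℝ) / 10 ^ 6) ≤
      squarefreeDensity * (Real.log N + Real.log (N + 1)) :=
    mul_le_mul lt_squarefreeDensity.le hlog (by positivity) squarefreeDensity_pos.le
  linarith [squarefreeInvSum_mul_le N]

end Sieve

section InvSum

open Real

lemma squarefreeInvSum_sub_card_div_le :
    squarefreeInvSum 8192 - (squarefreeUpTo 8192).card / (8192 : ℕ) ≤ 5.913794 := by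
  have hsub : squarefreeUpTo 8192 ⊆ (Finset.Ioc 0 8192).filter PassesSieve :=
    Finset.monotone_filter_right _ fun _ _ => passesSieve_of_squarefree
  have hsum : (∑ m ∈ squarefreeUpTo 8192, (10 ^ 12 / m + 1 - 122070312 : ℕ) : ℝ) ≤
      5913793998420 := by
    exact_mod_cast (Finset.sum_le_sum_of_subset hsub).trans sum_passesSieve_le
  have hterm : ∀ m ∈ squarefreeUpTo 8192,
      ((m : ℝ)⁻¹ - ((8192 : ℕ) : ℝ)⁻¹) * 10 ^ 12 ≤ (10 ^ 12 / m + 1 - 122070312 : ℕ) := by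
    intro m hm
    have hinv := inv_le_div_add_one (mem_squarefreeUpTo.mp hm).1.1
    have htrunc : ((10 ^ 12 / m + 1 : ℕ) : ℝ) ≤
        (10 ^ 12 / m + 1 - 122070312 : ℕ) + (122070312 : ℕ) := by
      rw [← Nat.cast_add, Nat.cast_le]
      exact Nat.le_add_of_sub_le le_rfl
    linarith
  have hle := (Finset.sum_le_sum hterm).trans hsum
  rw [← Finset.sum_mul, Finset.sum_sub_distrib, Finset.sum_const, nsmul_eq_mul,
    ← div_eq_mul_inv] at hle
  unfold squarefreeInvSum
  linarith

-- By partial summation `squarefreeInvSum N - card / N` is `∫ t in 1..N, Q t / t ^ 2`, where `Q`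
-- counts the squarefree integers; unlike `squarefreeInvSum` itself it can be compared at two
-- endpoints with only an upper bound for `Q`.
lemma squarefreeInvSum_sub_card_div_succ {N : ℕ} (hN : 0 < N) :
    squarefreeInvSum (N + 1) - (squarefreeUpTo (N + 1)).card / (N + 1 : ℕ) =
      squarefreeInvSum N - (squarefreeUpTo N).card / N +
        (squarefreeUpTo N).card / (N * (N + 1)) := by
  have hcard := sum_squarefreeUpTo_succ (fun _ => (1 : ℝ)) N
  simp only [Finset.sum_const, nsmul_eq_mul, mul_one] at hcard
  rw [squarefreeInvSum, sum_squarefreeUpTo_succ, hcard, ← squarefreeInvSum]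
  split_ifs
  all_goals
    push_cast
    field_simp
    ring

lemma inv_add_one_le_log_sub_log {t : ℝ} (ht : 0 < t) : (t + 1)⁻¹ ≤ log (t + 1) - log t := by
  rw [← log_div (by positivity) ht.ne']
  convert one_sub_inv_le_log_of_pos (x := (t + 1) / t) (by positivity) using 1
  field_simp
  ring

lemma two_div_sqrt_mul_le {t : ℝ} (ht : 0 < t) :
    2 / (√t * (t + 1)) ≤ 4 / √t - 4 / √(t + 1) := by
  have ha : 0 < √t := sqrt_pos.mpr ht
  have hab : √t ≤ √(t + 1) := sqrt_le_sqrt (by linarith)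
  have hb : 0 < √(t + 1) := ha.trans_le hab
  have hsq : √t ^ 2 = t := sq_sqrt ht.le
  have hsq' : √(t + 1) ^ 2 = t + 1 := sq_sqrt (by linarith)
  have hdiff : 4 / √t - 4 / √(t + 1) = 4 / (√t * √(t + 1) * (√t + √(t + 1))) := by
    have : (√(t + 1) - √t) * (√t + √(t + 1)) = 1 := by linear_combination hsq' - hsq
    field_simp
    linear_combination this
  have hmul : √t * √(t + 1) ^ 2 = √t * (t + 1) := by rw [hsq']
  rw [hdiff, div_le_div_iff₀ (by positivity) (by positivity)]
  linarith [mul_nonneg (mul_pos ha hb).le (sub_nonneg.mpr hab)]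

lemma squarefreeInvSum_sub_card_div_sub_le {X N : ℕ} (hX : 0 < X) (hXN : X ≤ N) :
    squarefreeInvSum N - (squarefreeUpTo N).card / N ≤
      squarefreeInvSum X - (squarefreeUpTo X).card / X +
        (squarefreeDensity * (log N - log X) + (4 / √X - 4 / √N) + ((X : ℝ)⁻¹ - (N : ℝ)⁻¹)) := by
  induction N, hXN using Nat.le_induction with
  | base => simp
  | succ N hXN ih =>
    have hN : (0 : ℝ) < N := by exact_mod_cast hX.trans_le hXN
    have hstep : ((squarefreeUpTo N).card : ℝ) / (N * (N + 1)) ≤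
        squarefreeDensity * (log (N + 1) - log N) + (4 / √N - 4 / √(N + 1)) +
          ((N : ℝ)⁻¹ - ((N : ℝ) + 1)⁻¹) := by
      have hsq : √(N : ℝ) ^ 2 = N := sq_sqrt hN.le
      have : 0 < √(N : ℝ) := sqrt_pos.mpr hN
      calc ((squarefreeUpTo N).card : ℝ) / (N * (N + 1))
          ≤ (squarefreeDensity * N + 2 * √N + 1) / (N * (N + 1)) := by
            gcongr
            exact card_squarefreeUpTo_le N
        _ = squarefreeDensity * ((N : ℝ) + 1)⁻¹ + 2 / (√N * (N + 1)) +
              ((N : ℝ)⁻¹ - ((N : ℝ) + 1)⁻¹) := by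
            have : 2 * √(N : ℝ) / (N * (N + 1)) = 2 / (√N * (N + 1)) := by
              rw [div_eq_div_iff (by positivity) (by positivity)]
              linear_combination 2 * ((N : ℝ) + 1) * hsq
            rw [add_div, add_div, this]
            field_simp
            ring
        _ ≤ _ := by
            gcongr
            · exact squarefreeDensity_pos.le
            · exact inv_add_one_le_log_sub_log hN
            · exact two_div_sqrt_mul_le hN
    rw [squarefreeInvSum_sub_card_div_succ (hX.trans_le hXN)]
    push_cast
    linarith

lemma squarefreeInvSum_le_of_le {X N : ℕ} (hX : 0 < X) (hXN : X ≤ N) :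
    squarefreeInvSum N ≤ squarefreeInvSum X - (squarefreeUpTo X).card / X +
      (squarefreeDensity * (log N - log X + 1) + 4 / √X + (X : ℝ)⁻¹) := by
  have hN : (0 : ℝ) < N := by exact_mod_cast hX.trans_le hXN
  have : 0 < √(N : ℝ) := sqrt_pos.mpr hN
  have hcard : ((squarefreeUpTo N).card : ℝ) / N ≤ squarefreeDensity + 4 / √N + (N : ℝ)⁻¹ := by
    rw [div_le_iff₀ hN]
    calc ((squarefreeUpTo N).card : ℝ) ≤ squarefreeDensity * N + 2 * √N + 1 :=
          card_squarefreeUpTo_le N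
      _ ≤ squarefreeDensity * N + 4 * √N + 1 := by gcongr; norm_num
      _ = (squarefreeDensity + 4 / √N + (N : ℝ)⁻¹) * N := by
          have hsq : √(N : ℝ) ^ 2 = N := sq_sqrt hN.le
          field_simp
          linear_combination 4 * hsq
  linarith [squarefreeInvSum_sub_card_div_sub_le hX hXN]

lemma squarefreeInvSum_le {N : ℕ} (hN : 8 ≤ N) :
    squarefreeInvSum N ≤ squarefreeDensity / 2 * (log N + log (N + 1)) + 1.09 := by
  rcases le_total N 8192 with hsmall | hlarge
  · exact (invSumCertificate_of_mem_Icc N (Finset.mem_Icc.mpr ⟨hN, hsmall⟩)).squarefreeInvSum_le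
      (by omega)
  · have hlog : log (8192 : ℕ) = 13 * log 2 := by
      rw [show ((8192 : ℕ) : ℝ) = 2 ^ 13 by norm_num, log_pow]
      norm_num
    have hsqrt : (90.5 : ℝ) ≤ √(8192 : ℕ) := le_sqrt_of_sq_le (by norm_num)
    have hinv : 4 / √(8192 : ℕ) ≤ 4 / 90.5 := by gcongr
    have hmono : log N ≤ log (N + 1) := log_le_log (by positivity) (by linarith)
    have h := squarefreeInvSum_le_of_le (by norm_num) hlarge
    rw [hlog] at h
    nlinarith [squarefreeInvSum_sub_card_div_le, lt_squarefreeDensity, log_two_gt_d9,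
      squarefreeDensity_pos, mul_le_mul_of_nonneg_left hmono squarefreeDensity_pos.le]

end InvSum

section FinalSum

open Real

/-- The sum of `log (N / m) / m` over the squarefree positive integers `m ≤ N`. -/
noncomputable def squarefreeLogSum (N : ℕ) : ℝ :=
  ∑ m ∈ squarefreeUpTo N, (log N - log m) * (m : ℝ)⁻¹

lemma sum_sub_log_mul_inv (N : ℕ) (κ : ℝ) :
    ∑ m ∈ squarefreeUpTo N, (κ - log m) * (m : ℝ)⁻¹ =
      squarefreeLogSum N + squarefreeInvSum N * (κ - log N) := by
  rw [squarefreeLogSum, squarefreeInvSum, Finset.sum_mul, ← Finset.sum_add_distrib]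
  exact Finset.sum_congr rfl fun m _ => by ring

lemma squarefreeLogSum_succ (N : ℕ) : squarefreeLogSum (N + 1) =
    squarefreeLogSum N + squarefreeInvSum N * (log (N + 1) - log N) := by
  rw [squarefreeLogSum, sum_squarefreeUpTo_succ, sub_self, zero_mul, ite_self, add_zero,
    Nat.cast_succ, sum_sub_log_mul_inv]

lemma squarefreeLogSum_eight_le :
    squarefreeLogSum 8 ≤ squarefreeDensity / 2 * log (8 : ℕ) ^ 2 + 1.09 * log (8 : ℕ) - 0.31 := by
  have hset : squarefreeUpTo 8 = {1, 2, 3, 5, 6, 7} := by decide +kernel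
  have h3 : ((1093800 : ℕ) : ℝ) / 10 ^ 6 ≤ log (3 : ℕ) := LogCertificate.le_log (by decide +kernel)
  have h5 : ((1608300 : ℕ) : ℝ) / 10 ^ 6 ≤ log (5 : ℕ) := LogCertificate.le_log (by decide +kernel)
  have h7 : ((1944000 : ℕ) : ℝ) / 10 ^ 6 ≤ log (7 : ℕ) := LogCertificate.le_log (by decide +kernel)
  have h6 : log (6 : ℕ) = log 2 + log (3 : ℕ) := by
    rw [← log_mul (by norm_num) (by norm_num)]
    norm_num
  have h8 : log (8 : ℕ) = 3 * log 2 := by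
    rw [show ((8 : ℕ) : ℝ) = 2 ^ 3 by norm_num, log_pow]
    norm_num
  have hsum : squarefreeLogSum 8 = log (8 : ℕ) + (log (8 : ℕ) - log (2 : ℕ)) / 2 +
      (log (8 : ℕ) - log (3 : ℕ)) / 3 + (log (8 : ℕ) - log (5 : ℕ)) / 5 +
      (log (8 : ℕ) - log (6 : ℕ)) / 6 + (log (8 : ℕ) - log (7 : ℕ)) / 7 := by
    rw [squarefreeLogSum, hset]
    norm_num
    ring
  rw [hsum, h6, h8]
  push_cast at *
  nlinarith [log_two_gt_d9, log_two_lt_d9, lt_squarefreeDensity,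
    mul_le_mul lt_squarefreeDensity.le (pow_le_pow_left₀ (by norm_num) log_two_gt_d9.le 2)
      (by positivity) squarefreeDensity_pos.le]

lemma squarefreeLogSum_le {N : ℕ} (hN : 8 ≤ N) :
    squarefreeLogSum N ≤ squarefreeDensity / 2 * log N ^ 2 + 1.09 * log N - 0.31 := by
  induction N, hN using Nat.le_induction with
  | base => exact squarefreeLogSum_eight_le
  | succ N hN ih =>
    have hmono : log N ≤ log (N + 1) :=
      log_le_log (by exact_mod_cast (by omega : 0 < N)) (by linarith)
    have hstep := mul_le_mul_of_nonneg_right (squarefreeInvSum_le hN) (sub_nonneg.mpr hmono)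
    rw [squarefreeLogSum_succ, Nat.cast_succ]
    linarith

lemma sum_sub_log_mul_inv_le {N : ℕ} (hN : 8 ≤ N) {κ : ℝ} (hκ : log (N + 1) ≤ κ) :
    ∑ m ∈ squarefreeUpTo N, (κ - log m) * (m : ℝ)⁻¹ ≤
      squarefreeDensity / 2 * κ ^ 2 + 1.09 * κ - 0.31 := by
  have hmono : log N ≤ log (N + 1) :=
    log_le_log (by exact_mod_cast (by omega : 0 < N)) (by linarith)
  have hinv : squarefreeInvSum N ≤ squarefreeDensity / 2 * (log N + κ) + 1.09 :=
    (squarefreeInvSum_le hN).trans (by have := squarefreeDensity_pos; gcongr)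
  have hstep := mul_le_mul_of_nonneg_right hinv (sub_nonneg.mpr (hmono.trans hκ))
  rw [sum_sub_log_mul_inv]
  linarith [squarefreeLogSum_le hN]

lemma four_mul_card_squarefreeUpTo_le (N : ℕ) : 4 * (squarefreeUpTo N).card ≤ 3 * N + 3 := by
  have hsub : squarefreeUpTo N ⊆ (Finset.Ioc 0 N).filter (¬ 4 ∣ ·) :=
    Finset.monotone_filter_right _ fun m _ hm h4 => by
      simpa using Nat.isUnit_iff.mp (hm 2 h4)
  have hcard := Finset.card_le_card hsub
  have hsplit := Finset.card_filter_add_card_filter_not (s := Finset.Ioc 0 N) (4 ∣ ·)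
  rw [Nat.Ioc_filter_dvd_card_eq_div, Nat.card_Ioc] at hsplit
  omega

lemma levelSum_div_sq_le {D m : ℕ} (hm : 0 < m) (hmD : 4 * m ^ 2 ≤ D) :
    (levelSum (D / m ^ 2) : ℝ) ≤ √D * ((log D / 2 - 0.08 - log m) * (m : ℝ)⁻¹) + 1 := by
  have hm' : (0 : ℝ) < m := by exact_mod_cast hm
  have h4 : 4 ≤ D / m ^ 2 := (Nat.le_div_iff_mul_le (by positivity)).mpr hmD
  have hD : (D : ℝ) ≠ 0 := by
    have : 0 < D := by nlinarith
    positivity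
  have hfloor : ((D / m ^ 2 : ℕ) : ℝ) ≤ D / (m : ℝ) ^ 2 := by exact_mod_cast Nat.cast_div_le
  have : (0 : ℝ) < (D / m ^ 2 : ℕ) := by exact_mod_cast (by omega : 0 < D / m ^ 2)
  have hsqrt : √(D / (m : ℝ) ^ 2) = √D * (m : ℝ)⁻¹ := by
    rw [sqrt_div' _ (by positivity), sqrt_sq hm'.le, div_eq_mul_inv]
  have hlog : log (D / (m : ℝ) ^ 2) = log D - 2 * log m := by
    rw [log_div hD (by positivity), log_pow]
    norm_num
  have hnonneg : 0 ≤ log (D / m ^ 2 : ℕ) / 2 - 0.08 := by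
    have : log 4 ≤ log (D / m ^ 2 : ℕ) := log_le_log (by norm_num) (by exact_mod_cast h4)
    rw [show (4 : ℝ) = 2 ^ 2 by norm_num, log_pow] at this
    push_cast at this
    linarith [log_two_gt_d9]
  calc (levelSum (D / m ^ 2) : ℝ)
      ≤ √(D / m ^ 2 : ℕ) * (log (D / m ^ 2 : ℕ) / 2 - 0.08) + 1 := levelSum_le h4
    _ ≤ √(D / (m : ℝ) ^ 2) * (log (D / (m : ℝ) ^ 2) / 2 - 0.08) + 1 := by gcongr
    _ = √D * ((log D / 2 - 0.08 - log m) * (m : ℝ)⁻¹) + 1 := by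
      rw [hsqrt, hlog]
      ring

lemma log_sqrt_div_four_add_one_le {D : ℕ} (hD : 8 ≤ D) :
    log (Nat.sqrt (D / 4) + 1) ≤ log D / 2 - 0.08 := by
  have hD' : (8 : ℝ) ≤ D := by exact_mod_cast hD
  have hsqrt : 2.8 ≤ √(D : ℝ) := le_sqrt_of_sq_le (by linarith)
  have hN : (Nat.sqrt (D / 4) : ℝ) ≤ 0.5 * √D :=
    sqrt_div_le_mul_sqrt (by norm_num) (by norm_num)
  calc log (Nat.sqrt (D / 4) + 1) ≤ log (0.9 * √D) := log_le_log (by positivity) (by linarith)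
    _ = log 0.9 + log D / 2 := by
      rw [log_mul (by norm_num) (by positivity), log_sqrt (by positivity)]
    _ ≤ log D / 2 - 0.08 := by
      linarith [log_le_sub_one_of_pos (by norm_num : (0 : ℝ) < 0.9)]

lemma sum_levelSum_div_sq_le {D : ℕ} (hD : 500 < D) :
    ∑ m ∈ squarefreeUpTo (Nat.sqrt (D / 4)), (levelSum (D / m ^ 2) : ℝ) ≤
      √D * (squarefreeDensity / 8 * log D ^ 2 + 0.525 * log D) := by
  set N := Nat.sqrt (D / 4)
  have hN8 : 8 ≤ N := (le_sqrt_div_iff four_pos).mpr (by omega)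
  have hD' : (501 : ℝ) ≤ D := by exact_mod_cast hD
  have hsqrt : 22.3 ≤ √(D : ℝ) := le_sqrt_of_sq_le (by linarith)
  have hNsqrt : (N : ℝ) ≤ 0.5 * √D := sqrt_div_le_mul_sqrt (by norm_num) (by norm_num)
  have hlogD : 6.2 ≤ log D := by
    have h500 : ((6200000 : ℕ) : ℝ) / 10 ^ 6 ≤ log (501 : ℕ) :=
      LogCertificate.le_log (by decide +kernel)
    have := log_le_log (by norm_num) hD'
    norm_num at h500 this ⊢
    linarith
  have hcard : ((squarefreeUpTo N).card : ℝ) * 4 ≤ 3 * N + 3 := by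
    exact_mod_cast (mul_comm _ _).trans_le (four_mul_card_squarefreeUpTo_le N)
  calc ∑ m ∈ squarefreeUpTo N, (levelSum (D / m ^ 2) : ℝ)
      ≤ ∑ m ∈ squarefreeUpTo N, (√D * ((log D / 2 - 0.08 - log m) * (m : ℝ)⁻¹) + 1) := by
        refine Finset.sum_le_sum fun m hm => ?_
        obtain ⟨⟨hm0, hmN⟩, -⟩ := mem_squarefreeUpTo.mp hm
        exact levelSum_div_sq_le hm0 ((le_sqrt_div_iff four_pos).mp hmN)
    _ = √D * ∑ m ∈ squarefreeUpTo N, (log D / 2 - 0.08 - log m) * (m : ℝ)⁻¹ +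
          (squarefreeUpTo N).card := by
        rw [Finset.sum_add_distrib, ← Finset.mul_sum, Finset.sum_const, nsmul_eq_mul, mul_one]
    _ ≤ √D * (squarefreeDensity / 2 * (log D / 2 - 0.08) ^ 2 + 1.09 * (log D / 2 - 0.08) - 0.31) +
          √D * 0.41 := by
        gcongr
        · exact sum_sub_log_mul_inv_le hN8 (log_sqrt_div_four_add_one_le (by omega))
        · linarith
    _ ≤ √D * (squarefreeDensity / 8 * log D ^ 2 + 0.525 * log D) := by
        rw [← mul_add]
        refine mul_le_mul_of_nonneg_left ?_ (sqrt_nonneg _)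
        nlinarith [mul_le_mul lt_squarefreeDensity.le hlogD (by norm_num) squarefreeDensity_pos.le,
          mul_le_mul_of_nonneg_right lt_squarefreeDensity.le (by linarith : 0 ≤ log D),
          squarefreeDensity_lt]

end FinalSum

open Real in
theorem cusp_chern_cycle_estimate
    (D : ℤ) (hD : IsFundamentalDiscriminant D) (h500 : 500 < D) :
    (1 / 2 : ℝ) *
        ∑ x ∈ (Finset.Ioo (-D) D).filter (fun x => x ^ 2 < D ∧ (D - x ^ 2) % 4 = 0),
          (((D - x ^ 2) / 4).toNat.divisors.card : ℝ) ≤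
      (1 / 2 : ℝ) * Real.sqrt D *
        ((3 / (2 * Real.pi ^ 2)) * Real.log D ^ 2 + 1.05 * Real.log D) := by
  lift D to ℕ using by omega
  rw [mul_assoc]
  gcongr
  calc _ ≤ (2 * ∑ a ∈ Finset.Ioc 0 D, 2 ^ a.primeFactors.card * levelCount (D / a ^ 2) : ℝ) := by
        exact_mod_cast sum_card_divisors_le hD
    _ ≤ 2 * ∑ m ∈ squarefreeUpTo (Nat.sqrt (D / 4)), (levelSum (D / m ^ 2) : ℝ) := by
        exact_mod_cast Nat.mul_le_mul_left 2 (sum_two_pow_mul_levelCount_le D D)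
    _ ≤ 2 * (√D * (squarefreeDensity / 8 * log D ^ 2 + 0.525 * log D)) := by
        gcongr
        exact sum_levelSum_div_sq_le (by exact_mod_cast h500)
    _ = _ := by
        rw [squarefreeDensity, Int.cast_natCast]
        ring
end
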